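/- Let G be a finite group, let (X, L, s, t) be a connected directed multigraph with V = |X| ≥ 1 sites and E = |L| links, and let U be a finite-dimensional complex representation of G on a space W with character χ_U. Consider the complex vector space H = ((L → G) → ℂ) ⊗ (⊗_{x ∈ X} W), where the first factor has orthonormal basis {|h⟩ : h : L → G}, with the representation of the product group ∏_{x ∈ X} G defined on basis vectors by (g_x)_{x} · (|h⟩ ⊗ (⊗_x w_x)) = |l ↦ g_{s(l)} h(l) g_{t(l)}⁻¹⟩ ⊗ (⊗_x U(g_x) w_x). Then the dimension of the subspace of vectors invariant under this representation satisfies dim H_phys = Σ_C (|G|/|C|)^{E−V} · χ_U(C)^V, where the sum runs over the conjugacy classes C of G, χ_U(C) is the character value on any element of C, and the integer power E−V ≥ −1 is interpreted in ℂ. -/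

import Mathlib

/-!
By Burnside averaging, `|G|^V * dim H_phys` is the sum over gauge transformations `g` of the
character of `H` at `g`. The trace on the links counts the configurations fixed by `g`, which are
the `h` with `h l` conjugating `g (t l)` into `g (s l)` for every link `l`; on a connected graph
there are none unless all the `g x` lie in a single conjugacy class `C`, and then there are
`(|G| / |C|)^E` of them. The trace on the matter is the product of the `χ_U (g x)`, so that `C`
contributes `(|G| / |C|)^E * (|C| * χ_U(C))^V` to the sum.
-/

open scoped TensorProduct

/-- Connectivity of a directed multigraph with sites `X` and links `L`,
ignoring orientation. -/
def MultigraphConnected {X L : Type*} (s t : L → X) : Prop :=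
  ∀ a b : X, Relation.ReflTransGen
    (fun u v => ∃ l : L, (s l = u ∧ t l = v) ∨ (s l = v ∧ t l = u)) a b

/-- The action of a gauge transformation `g : X → G` on a link configuration
`h : L → G`: on the link `l` it sends `h l` to `g (s l) * h l * (g (t l))⁻¹`. -/
def gaugeSmul {G X L : Type*} [Group G] (s t : L → X) (g : X → G) (h : L → G) :
    L → G :=
  fun l => g (s l) * h l * (g (t l))⁻¹

lemma gaugeSmul_mul {G X L : Type*} [Group G] (s t : L → X) (g g' : X → G)
    (h : L → G) : gaugeSmul s t g (gaugeSmul s t g' h) = gaugeSmul s t (g * g') h := by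
  funext l
  simp [gaugeSmul, mul_assoc]

/-- The representation of the group of gauge transformations `X → G` on the link
Hilbert space `(L → G) → ℂ`, sending the basis vector `|h⟩` (the delta function at `h`)
to `|gaugeSmul g h⟩`. -/
noncomputable def linkRep (G : Type*) [Group G] {X L : Type*} (s t : L → X) :
    Representation ℂ (X → G) ((L → G) → ℂ) where
  toFun g := LinearMap.funLeft ℂ ℂ (gaugeSmul s t g⁻¹)
  map_one' := by
    ext f h
    show f (gaugeSmul s t 1⁻¹ h) = f h
    congr 1
    funext l
    simp [gaugeSmul]
  map_mul' g g' := by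
    ext f h
    show f (gaugeSmul s t (g * g')⁻¹ h) =
      f (gaugeSmul s t g'⁻¹ (gaugeSmul s t g⁻¹ h))
    rw [gaugeSmul_mul, mul_inv_rev]

/-- The representation of the group of gauge transformations `X → G` on the matter
Hilbert space `⨂ₓ W`, given on site `x` by `U (g x)`. -/
noncomputable def matterRep {G X W : Type*} [Group G] [AddCommGroup W] [Module ℂ W]
    (U : Representation ℂ G W) :
    Representation ℂ (X → G) (⨂[ℂ] (_ : X), W) where
  toFun g := PiTensorProduct.map (fun x => U (g x))
  map_one' := by
    simp only [Pi.one_apply, map_one]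
    exact PiTensorProduct.map_one
  map_mul' g g' := by
    simp only [Pi.mul_apply, map_mul]
    exact PiTensorProduct.map_mul _ _

section Trace

variable {R : Type*} [CommRing R]

theorem trace_funLeft {α : Type*} [Finite α] (f : α → α) :
    LinearMap.trace R (α → R) (LinearMap.funLeft R R f) =
      (Nat.card (Function.fixedPoints f) : R) := by
  classical
  have := Fintype.ofFinite α
  rw [LinearMap.trace_eq_matrix_trace R (Pi.basisFun R α), Matrix.trace,
    Nat.card_eq_fintype_card, Fintype.card_subtype]
  simp [LinearMap.funLeft_apply, Pi.single_apply, Function.IsFixedPt]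

theorem trace_piTensorProduct_map {ι : Type*} [Fintype ι] {M : ι → Type*}
    [∀ i, AddCommGroup (M i)] [∀ i, Module R (M i)] [∀ i, Module.Free R (M i)]
    [∀ i, Module.Finite R (M i)] (f : ∀ i, M i →ₗ[R] M i) :
    LinearMap.trace R (⨂[R] i, M i) (PiTensorProduct.map f) =
      ∏ i, LinearMap.trace R (M i) (f i) := by
  classical
  let b (i : ι) := Module.Free.chooseBasis R (M i)
  simp_rw [LinearMap.trace_eq_matrix_trace R (Basis.piTensorProduct b),
    fun i => LinearMap.trace_eq_matrix_trace R (b i) (f i), Matrix.trace, Fintype.prod_sum]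
  simp [LinearMap.toMatrix_apply, PiTensorProduct.map_tprod]

end Trace

section Conjugacy

variable {G : Type*} [Group G]

theorem card_centralizer_mul_card_carrier (a : G) :
    Nat.card (Subgroup.centralizer {a}) * Nat.card (ConjClasses.mk a).carrier = Nat.card G := by
  rw [Subgroup.nat_card_centralizer_nat_card_stabilizer, ← ConjAct.orbit_eq_carrier_conjClasses,
    mul_comm, ← Nat.card_prod]
  exact Nat.card_congr (MulAction.orbitProdStabilizerEquivGroup (ConjAct G) a)

theorem card_semiconjBy_eq_card_centralizer {a b : G} (h : IsConj a b) :
    Nat.card {k : G // SemiconjBy k a b} = Nat.card (Subgroup.centralizer {a}) := by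
  obtain ⟨c, hc⟩ := h
  refine (Nat.card_congr ((Equiv.mulLeft (c : G)).subtypeEquiv fun k => ?_)).symm
  have hk : k ∈ Subgroup.centralizer {a} ↔ SemiconjBy k a a :=
    Subgroup.mem_centralizer_singleton_iff
  rw [hk]
  refine ⟨hc.mul_left, fun hck => ?_⟩
  simpa using hc.inv_symm_left.mul_left hck

theorem card_carrier_ne_zero [Finite G] (C : ConjClasses G) : Nat.card C.carrier ≠ 0 := by
  obtain ⟨a, rfl⟩ := ConjClasses.exists_rep C
  have : Nonempty (ConjClasses.mk a).carrier := ⟨a, ConjClasses.mem_carrier_mk⟩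
  exact Nat.card_pos.ne'

theorem card_semiconjBy_eq_ite {k : Type*} [DivisionRing k] [CharZero k] [Finite G]
    [DecidableEq (ConjClasses G)] (a b : G) :
    (Nat.card {c : G // SemiconjBy c a b} : k) =
      if ConjClasses.mk a = ConjClasses.mk b then
        (Nat.card G : k) / (Nat.card (ConjClasses.mk a).carrier : k) else 0 := by
  split_ifs with h
  · rw [ConjClasses.mk_eq_mk_iff_isConj] at h
    rw [card_semiconjBy_eq_card_centralizer h,
      eq_div_iff (Nat.cast_ne_zero.2 (card_carrier_ne_zero _)),
      ← card_centralizer_mul_card_carrier a, Nat.cast_mul]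
  · have : IsEmpty {c : G // SemiconjBy c a b} :=
      ⟨fun c => h (ConjClasses.mk_eq_mk_iff_isConj.2 ⟨toUnits c.1, c.2⟩)⟩
    simp

theorem sum_character_conjClass {k W : Type*} [Fintype G] [DecidableEq (ConjClasses G)] [Field k]
    [AddCommGroup W] [Module k W] (U : Representation k G W) (C : ConjClasses G) :
    ∑ a with ConjClasses.mk a = C, U.character a =
      Nat.card C.carrier * U.character (Quotient.out C) := by
  have character_eq (a : G) (ha : ConjClasses.mk a = C) :
      U.character a = U.character (Quotient.out C) := by
    have hout : ConjClasses.mk a = ConjClasses.mk (Quotient.out C) :=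
      ha.trans (Quotient.out_eq C).symm
    obtain ⟨c, hc⟩ := isConj_iff.1 (ConjClasses.mk_eq_mk_iff_isConj.1 hout)
    rw [← hc, Representation.char_conj]
  have card_eq : Nat.card C.carrier = Finset.card {a : G | ConjClasses.mk a = C} := by
    simp_rw [← Fintype.card_subtype, ← Nat.card_eq_fintype_card,
      ← ConjClasses.mem_carrier_iff_mk_eq]
  rw [card_eq, ← nsmul_eq_mul]
  exact Finset.sum_eq_card_nsmul fun a ha => character_eq a (Finset.mem_filter.1 ha).2

end Conjugacy

namespace MultigraphConnected

variable {X L : Type*} {s t : L → X}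

theorem apply_eq_apply (hconn : MultigraphConnected s t) {B : Type*} {f : X → B}
    (hf : ∀ l, f (t l) = f (s l)) (x y : X) : f x = f y := by
  induction hconn x y with
  | refl => rfl
  | tail _ hlink ih =>
    obtain ⟨l, ⟨rfl, rfl⟩ | ⟨rfl, rfl⟩⟩ := hlink
    · exact ih.trans (hf l).symm
    · exact ih.trans (hf l)

variable [Fintype X] [Nonempty X] [Fintype L] {B R : Type*} [Fintype B] [DecidableEq B]
  [CommSemiring R]

theorem prod_link_eq_sum_ite (hconn : MultigraphConnected s t) (f : X → B) (w : B → R) :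
    (∏ l, if f (t l) = f (s l) then w (f (t l)) else 0) =
      ∑ b, if ∀ x, f x = b then w b ^ Fintype.card L else 0 := by
  by_cases hf : ∀ l, f (t l) = f (s l)
  · obtain ⟨x₀⟩ := ‹Nonempty X›
    have f_eq (x : X) : f x = f x₀ := hconn.apply_eq_apply hf x x₀
    simp [f_eq]
  · have not_const (b : B) : ¬ ∀ x, f x = b :=
      fun hb => hf fun l => (hb (t l)).trans (hb (s l)).symm
    rw [Fintype.prod_ite_zero, if_neg hf]
    simp [not_const]

theorem sum_prod_link_mul_prod_site [DecidableEq X] (hconn : MultigraphConnected s t)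
    {A : Type*} [Fintype A] (π : A → B) (w : B → R) (φ : A → R) :
    ∑ g : X → A, (∏ l, if π (g (t l)) = π (g (s l)) then w (π (g (t l))) else 0) *
        ∏ x, φ (g x) =
      ∑ b, w b ^ Fintype.card L * (∑ a with π a = b, φ a) ^ Fintype.card X :=
  calc
    _ = ∑ g : X → A, ∑ b, w b ^ Fintype.card L * ∏ x, if π (g x) = b then φ (g x) else 0 := by
      refine Finset.sum_congr rfl fun g _ => ?_
      rw [hconn.prod_link_eq_sum_ite (fun x => π (g x)) w, Finset.sum_mul]
      simp only [Fintype.prod_ite_zero, ite_mul, zero_mul, mul_ite, mul_zero]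
    _ = ∑ b, w b ^ Fintype.card L * ∑ g : X → A, ∏ x, if π (g x) = b then φ (g x) else 0 := by
      rw [Finset.sum_comm]
      simp only [Finset.mul_sum]
    _ = _ := by
      refine Finset.sum_congr rfl fun b _ => ?_
      rw [← Fintype.prod_sum (fun (_ : X) a => if π a = b then φ a else 0), Finset.prod_const,
        Finset.card_univ, Finset.sum_filter]

end MultigraphConnected

section Gauge

variable {G X L : Type*} [Group G]

theorem gaugeSmul_inv_eq_self_iff (s t : L → X) (g : X → G) (h : L → G) :
    gaugeSmul s t g⁻¹ h = h ↔ ∀ l, SemiconjBy (h l) (g (t l)) (g (s l)) := by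
  simp only [funext_iff, gaugeSmul, Pi.inv_apply, inv_inv, mul_assoc, inv_mul_eq_iff_eq_mul,
    SemiconjBy]

theorem character_linkRep [Finite G] [Fintype L] (s t : L → X) (g : X → G) :
    (linkRep G s t).character g =
      ∏ l, (Nat.card {c : G // SemiconjBy c (g (t l)) (g (s l))} : ℂ) := by
  have fixedPoints_equiv : Function.fixedPoints (gaugeSmul s t g⁻¹) ≃
      ∀ l, {c : G // SemiconjBy c (g (t l)) (g (s l))} :=
    (Equiv.subtypeEquivRight (gaugeSmul_inv_eq_self_iff s t g)).trans
      (Equiv.subtypePiEquivPi (p := fun l c => SemiconjBy c (g (t l)) (g (s l))))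
  rw [← Nat.cast_prod, ← Nat.card_pi, ← Nat.card_congr fixedPoints_equiv]
  exact trace_funLeft (gaugeSmul s t g⁻¹)

theorem character_matterRep [Fintype X] {W : Type*} [AddCommGroup W] [Module ℂ W]
    [FiniteDimensional ℂ W] (U : Representation ℂ G W) (g : X → G) :
    (matterRep U).character g = ∏ x, U.character (g x) :=
  trace_piTensorProduct_map fun x => U (g x)

end Gauge

theorem inv_pow_mul_div_pow_mul_mul_pow {k : Type*} [Field k] {n c : k} (hn : n ≠ 0) (hc : c ≠ 0)
    (χ : k) (e v : ℕ) :
    (n ^ v)⁻¹ * ((n / c) ^ e * (c * χ) ^ v) = (n / c) ^ ((e : ℤ) - (v : ℤ)) * χ ^ v := by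
  rw [zpow_sub₀ (div_ne_zero hn hc), zpow_natCast, zpow_natCast, mul_pow, div_pow n c v]
  field_simp

/-- **Master counting formula.** -/
theorem master_counting_formula
    {G X L : Type*} [Group G] [Fintype G] [DecidableEq G]
    [Fintype X] [Nonempty X] [Fintype L]
    (s t : L → X) (hconn : MultigraphConnected s t)
    {W : Type*} [AddCommGroup W] [Module ℂ W] [FiniteDimensional ℂ W]
    (U : Representation ℂ G W) :
    (Module.finrank ℂ ((linkRep G s t).tprod (matterRep (X := X) U)).invariants : ℂ) =
      ∑ C : ConjClasses G,
        ((Fintype.card G : ℂ) / (Nat.card C.carrier : ℂ)) ^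
            ((Fintype.card L : ℤ) - (Fintype.card X : ℤ)) *
          (LinearMap.trace ℂ W (U (Quotient.out C))) ^ (Fintype.card X) := by
  classical
  have card_ne_zero : (Fintype.card G : ℂ) ≠ 0 := Nat.cast_ne_zero.2 Fintype.card_ne_zero
  have : Invertible (Nat.card (X → G) : ℂ) :=
    invertibleOfNonzero (Nat.cast_ne_zero.2 Nat.card_pos.ne')
  have sum_character : ∑ g, ((linkRep G s t).tprod (matterRep (X := X) U)).character g =
      ∑ C : ConjClasses G, ((Fintype.card G : ℂ) / Nat.card C.carrier) ^ Fintype.card L *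
        (Nat.card C.carrier * U.character (Quotient.out C)) ^ Fintype.card X := by
    simp only [Representation.char_tensor, Pi.mul_apply, character_linkRep, character_matterRep,
      card_semiconjBy_eq_ite, ← sum_character_conjClass, Nat.card_eq_fintype_card (α := G)]
    exact hconn.sum_prod_link_mul_prod_site ConjClasses.mk
      (fun C => (Fintype.card G : ℂ) / Nat.card C.carrier) U.character
  rw [← Representation.card_inv_mul_sum_char_eq_finrank, sum_character, Finset.mul_sum,
    Nat.card_fun, Nat.cast_pow, Nat.card_eq_fintype_card, Nat.card_eq_fintype_card]
  exact Finset.sum_congr rfl fun C _ => inv_pow_mul_div_pow_mul_mul_pow card_ne_zero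
    (Nat.cast_ne_zero.2 (card_carrier_ne_zero C)) _ _ _
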